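/- Fix an integer n ≥ 1 and a real q > 1. For indices i = (i_1,…,i_n) ∈ ℕⁿ, j = (j_1,…,j_n) ∈ ℕⁿ, j_{n+1} ∈ ℤ, k = (k_1,…,k_n) ∈ ℕⁿ satisfying i_m k_m = 0 for all 1 ≤ m ≤ n, define the bounded operator p^{i,j,k} = (v_n*)^{i_n} ⋯ (v_1*)^{i_1} y_1^{j_1} ⋯ y_n^{j_n} Y v_1^{k_1} ⋯ v_n^{k_n} on ℓ²(ℤ) ⊗ H_n, where y_m = v_m v_m*, Y = v_{n+1}^{j_{n+1}} if j_{n+1} ≥ 0 and Y = (v_{n+1}*)^{−j_{n+1}} if j_{n+1} < 0. Then the family of all such operators p^{i,j,k}, indexed by the tuples (i, j, j_{n+1}, k) satisfying the above conditions, is linearly independent over ℂ. -/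

import Mathlib

noncomputable section

/-- The Hilbert space `ℓ²(ℤ) ⊗ H_n = ℓ²(ℤ × ℕⁿ)`, where `H_n = ℓ²(ℕⁿ)`. -/
abbrev HZ (n : ℕ) : Type := lp (fun _ : ℤ × (Fin n → ℕ) => ℂ) 2

/-- The standard orthonormal basis vectors `e_m ⊗ e_k` of `ℓ²(ℤ × ℕⁿ)`. -/
def ez {n : ℕ} (m : ℤ) (k : Fin n → ℕ) : HZ n := lp.single 2 (m, k) 1

/-- For an index `j` with `1 ≤ j+1 ≤ n` (so `w_{j+2} = γ^{⊗(n-1-j)} ⊗ α* ⊗ 1^{⊗j}`),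
the (0-based) coordinate `n - 1 - j` at which the shift `α*` acts. -/
def shiftIdx {n : ℕ} (j : Fin n) : Fin n := ⟨n - 1 - (j : ℕ), by have := j.isLt; omega⟩

/-- `IsVFamily q v` says that `v 0, …, v n` are the operators `v_i = S ⊗ w_i`
(`1 ≤ i ≤ n+1`) on `ℓ²(ℤ) ⊗ ℓ²(ℕⁿ)`, where `S` is the bilateral shift and
`w_1 e_k = q^{-(k_1+⋯+k_n)} e_k`,
`w_i e_k = q^{-(k_1+⋯+k_{n+1-i})} (1-q^{-2(k_{n+2-i}+1)})^{1/2} e_{k+δ_{n+2-i}}` for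
`2 ≤ i ≤ n+1`.  The `v_i` are the images of the generators `u_{n+1,i}` of
`C(S_q^{2n+1})` under the faithful representation `(τ'_{n+1} ⊗ π_{n(n-1)⋯21})Δⁿ`. -/
def IsVFamily (q : ℝ) {n : ℕ} (v : Fin (n + 1) → (HZ n →L[ℂ] HZ n)) : Prop :=
  (∀ (m : ℤ) (k : Fin n → ℕ),
    v 0 (ez m k) = (q ^ (-(∑ s, (k s : ℤ)))) • ez (m + 1) k) ∧
  (∀ (j : Fin n) (m : ℤ) (k : Fin n → ℕ),
    v j.succ (ez m k) =
      ((q ^ (-(∑ s ∈ Finset.univ.filter (fun s : Fin n => (s : ℕ) < n - 1 - (j : ℕ)), (k s : ℤ)))) *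
          Real.sqrt (1 - q ^ (-2 * ((k (shiftIdx j) : ℤ) + 1)))) •
        ez (m + 1) (Function.update k (shiftIdx j) (k (shiftIdx j) + 1)))

/-- `A_n(q)`: the unital C*-subalgebra of bounded operators on `ℓ²(ℤ) ⊗ ℓ²(ℕⁿ)` generated
by `v_1, …, v_{n+1}`; the concrete realization of the quantum sphere algebra
`C(S_q^{2n+1})`. -/
def sphereAlg {n : ℕ} (v : Fin (n + 1) → (HZ n →L[ℂ] HZ n)) :
    StarSubalgebra ℂ (HZ n →L[ℂ] HZ n) :=
  (StarAlgebra.adjoin ℂ (Set.range v)).topologicalClosure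

/-- Index data for the monomials `p^{i,j,k}`: multi-indices `i, k ∈ ℕⁿ`, `j ∈ ℕⁿ`,
`j_{n+1} ∈ ℤ`, subject to `i_m k_m = 0` for `1 ≤ m ≤ n`.  The components of
`t = (i, j, j_{n+1}, k)` are `t.1.1 = i`, `t.1.2.1 = j`, `t.1.2.2.1 = j_{n+1}`,
`t.1.2.2.2 = k`. -/
def pIdx (n : ℕ) : Type :=
  {t : (Fin n → ℕ) × (Fin n → ℕ) × ℤ × (Fin n → ℕ) // ∀ m : Fin n, t.1 m * t.2.2.2 m = 0}

/-- The monomial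
`p^{i,j,k} = (v_n*)^{i_n} ⋯ (v_1*)^{i_1} y_1^{j_1} ⋯ y_n^{j_n} Y v_1^{k_1} ⋯ v_n^{k_n}`
where `y_m = v_m v_m*`, and `Y = v_{n+1}^{j_{n+1}}` if `j_{n+1} ≥ 0`,
`Y = (v_{n+1}*)^{-j_{n+1}}` if `j_{n+1} < 0`.  (Here `v_m = v ⟨m-1⟩` for `1 ≤ m ≤ n+1`.) -/
def pOp {n : ℕ} (v : Fin (n + 1) → (HZ n →L[ℂ] HZ n)) (t : pIdx n) :
    HZ n →L[ℂ] HZ n :=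
  (List.ofFn fun s : Fin n => (star (v s.rev.castSucc)) ^ (t.1.1 s.rev)).prod *
  (List.ofFn fun s : Fin n => (v s.castSucc * star (v s.castSucc)) ^ (t.1.2.1 s)).prod *
  (if 0 ≤ t.1.2.2.1 then (v (Fin.last n)) ^ (t.1.2.2.1.toNat)
    else (star (v (Fin.last n))) ^ ((-t.1.2.2.1).toNat)) *
  (List.ofFn fun s : Fin n => (v s.castSucc) ^ (t.1.2.2.2 s)).prod

/-! Each `v s` is a weighted shift of the standard basis, so a monomial shifts it too, by a degree
from which `(i, j_{n+1}, k)` can be read off because the positive and negative exponents have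
disjoint supports. Hence a vanishing combination can be tested one such triple at a time. For a
fixed triple only `j` varies, and the matrix coefficients of the monomials are, up to nonzero
factors, the monomials in the eigenvalues of `y_1, …, y_n`. At `e_m ⊗ e_k` these eigenvalues are the
stick-breaking coordinates of the point with entries `q ^ (-2 * k a)`. They are algebraically
independent, because these points form a grid with infinite sides, and because stick-breaking is
dominant: every increment vector with nonzero partial sums lies in its image. -/

theorem linearIndependent_of_fiberwise {K E M ι κ : Type*} [Ring K] [AddCommGroup E] [Module K E]
    [AddCommGroup M] [Module K M] {p : ι → E} (f : ι → κ)
    (h : ∀ t₀, ∃ Φ : E →ₗ[K] M, (∀ t, f t ≠ f t₀ → Φ (p t) = 0) ∧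
      LinearIndependent K fun t : f ⁻¹' {f t₀} => Φ (p t)) :
    LinearIndependent K p := by
  classical
  rw [linearIndependent_iff']
  intro F g hg t₀ ht₀
  obtain ⟨Φ, hΦ, hli⟩ := h t₀
  refine linearIndependent_iff'.mp hli (F.subtype (· ∈ f ⁻¹' {f t₀})) (fun t => g t) ?_
    ⟨t₀, rfl⟩ (Finset.mem_subtype.mpr ht₀)
  calc ∑ t ∈ F.subtype (· ∈ f ⁻¹' {f t₀}), g t • Φ (p t)
      = ∑ t ∈ F with f t = f t₀, g t • Φ (p t) :=
        Finset.sum_subtype_eq_sum_filter (fun t => g t • Φ (p t))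
    _ = ∑ t ∈ F, g t • Φ (p t) := Finset.sum_filter_of_ne fun t _ => by
        contrapose!
        intro ht
        rw [hΦ t ht, smul_zero]
    _ = Φ (∑ t ∈ F, g t • p t) := by simp only [map_sum, map_smul]
    _ = 0 := by rw [hg, map_zero]

theorem linearIndependent_prod_pow {R A ι : Type*} [CommRing R] [CommRing A] [Algebra R A]
    [Fintype ι] {x : ι → A} (hx : AlgebraicIndependent R x) :
    LinearIndependent R fun j : ι → ℕ => ∏ s, x s ^ j s := by
  have hmonomial := ((MvPolynomial.basisMonomials ι R).linearIndependent.map'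
    (MvPolynomial.aeval x).toLinearMap (LinearMap.ker_eq_bot.mpr hx)).comp _
    Finsupp.equivFunOnFinite.symm.injective
  simpa [Function.comp_def, MvPolynomial.aeval_monomial, Finsupp.prod_fintype] using hmonomial

theorem algebraicIndependent_pi_of_injective {K σ ι : Type*} [CommRing K] [IsDomain K] [Infinite ι]
    {u : σ → ι → K} (hu : ∀ a, Function.Injective (u a)) :
    AlgebraicIndependent K fun (a : σ) (z : σ → ι) => u a (z a) := by
  rw [algebraicIndependent_iff]
  intro p hp
  refine MvPolynomial.funext_set (fun a => Set.range (u a))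
    (fun a => Set.infinite_range_of_injective (hu a)) fun y hy => ?_
  choose z hz using fun a => hy a (Set.mem_univ a)
  obtain rfl : (fun a => u a (z a)) = y := funext hz
  calc MvPolynomial.eval (fun a => u a (z a)) p
      = MvPolynomial.aeval (fun a (z : σ → ι) => u a (z a)) p z := by
        rw [← MvPolynomial.aeval_eq_eval]
        exact (MvPolynomial.comp_aeval_apply (fun a (z : σ → ι) => u a (z a))
          (Pi.evalAlgHom K (fun _ => K) z) p).symm
    _ = MvPolynomial.eval _ 0 := by rw [hp, map_zero, Pi.zero_apply]

section StickBreaking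

/-- The stick-breaking coordinates of `x`, listed from the last one to the first: `∏ a, x a`,
followed by the `(∏ a < b, x a) * (1 - x b)` for decreasing `b`.  They sum to `1`. With
`x a = q ^ (-2 * k a)`, these are the eigenvalues on `e_m ⊗ e_k` of the operators `v_i v_i*`. -/
def stickBreaking {R : Type*} [CommRing R] {n : ℕ} (x : Fin n → R) : Fin (n + 1) → R :=
  Fin.cons (∏ a, x a) fun j => (∏ a ∈ Finset.Iio j.rev, x a) * (1 - x j.rev)

theorem map_stickBreaking {R S F : Type*} [CommRing R] [CommRing S] [FunLike F R S]
    [RingHomClass F R S] (f : F) {n : ℕ} (x : Fin n → R) (s : Fin (n + 1)) :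
    f (stickBreaking x s) = stickBreaking (fun a => f (x a)) s := by
  cases s using Fin.cases <;> simp [stickBreaking]

theorem stickBreaking_apply {R ι : Type*} [CommRing R] {n : ℕ} (x : Fin n → ι → R)
    (s : Fin (n + 1)) (i : ι) : stickBreaking x s i = stickBreaking (fun a => x a i) s :=
  map_stickBreaking (Pi.evalRingHom (fun _ => R) i) x s

theorem prod_range_div_of_ne_zero {K : Type*} [CommGroupWithZero K] (M : ℕ → K)
    (hM : ∀ i, M i ≠ 0) (r : ℕ) :
    ∏ i ∈ Finset.range r, M (i + 1) / M i = M r / M 0 := by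
  refine Finset.prod_range_induction _ (fun r => M r / M 0) (div_self (hM 0)) r fun k _ => ?_
  rw [div_mul_div_comm, mul_comm (M k), mul_div_mul_right _ _ (hM k)]

variable {K : Type*} [Field K] {n : ℕ}

/- In the telescoping products `x a = M (a + 1) / M a`, where `M a` is the `(n + 1 - a)`-th partial
sum, except that `M 0 = 1`. -/
theorem exists_stickBreaking_eq_sub {S : ℕ → K} (h₀ : S 0 = 0) (hS : ∀ k, S (k + 1) ≠ 0) :
    ∃ x : Fin n → K, ∀ s : Fin n, stickBreaking x s.castSucc = S (s + 1) - S s := by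
  let M : ℕ → K := Function.update (fun a => S (n - a + 1)) 0 1
  have hM₀ : M 0 = 1 := Function.update_self ..
  have hM_succ (a : ℕ) : M (a + 1) = S (n - (a + 1) + 1) := Function.update_of_ne (by simp) ..
  have hM (a : ℕ) : M a ≠ 0 := by
    cases a with
    | zero => simp [hM₀]
    | succ a => simpa only [hM_succ] using hS _
  have hprod (r : ℕ) : ∏ a ∈ Finset.range r, M (a + 1) / M a = M r := by
    rw [prod_range_div_of_ne_zero M hM, hM₀, div_one]
  refine ⟨fun a => M (a + 1) / M a, fun s => ?_⟩
  cases n with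
  | zero => exact s.elim0
  | succ n =>
    cases s using Fin.cases with
    | zero =>
      simp only [Fin.castSucc_zero, stickBreaking, Fin.cons_zero, Fin.val_zero, h₀, sub_zero]
      rw [Fin.prod_univ_eq_prod_range (fun a => M (a + 1) / M a), hprod, hM_succ, Nat.sub_self]
    | succ j =>
      have hIio : ∏ a ∈ Finset.Iio j.castSucc.rev, M (a + 1) / M a = M j.castSucc.rev := by
        rw [← hprod, ← Nat.Iio_eq_range, ← Fin.map_valEmbedding_Iio, Finset.prod_map]
        rfl
      have hrev : (j.castSucc.rev : ℕ) = n - 1 - j + 1 := by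
        simp only [Fin.val_rev, Fin.val_castSucc]
        omega
      have hupper : n + 1 - (n - 1 - j + 1) = j.succ := by rw [Fin.val_succ]; omega
      have hlower : n + 1 - (n - 1 - j + 1 + 1) + 1 = j.succ := by rw [Fin.val_succ]; omega
      simp only [← Fin.succ_castSucc, stickBreaking, Fin.cons_succ]
      rw [hIio, mul_one_sub, mul_div_cancel₀ _ (hM _), hrev, hM_succ, hM_succ, hupper, hlower]

theorem algebraicIndependent_stickBreaking_X [CharZero K] :
    AlgebraicIndependent K fun s : Fin n =>
      stickBreaking (MvPolynomial.X (R := K)) s.castSucc := by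
  rw [algebraicIndependent_iff]
  intro p hp
  refine MvPolynomial.funext_set (fun _ => Set.range fun k : ℕ => (k + 1 : K))
    (fun _ => Set.infinite_range_of_injective fun k l h => by simpa using h) fun y hy => ?_
  choose k hk using fun s => hy s (Set.mem_univ s)
  let S (m : ℕ) : ℕ := ∑ r ∈ Finset.range m, (Function.extend Fin.val k 0 r + 1)
  have hS (s : Fin n) : (S (s + 1) : K) - S s = y s := by
    simp [S, Finset.sum_range_succ, Fin.val_injective.extend_apply, ← hk]
  obtain ⟨x, hx⟩ := exists_stickBreaking_eq_sub (K := K) (n := n) (S := fun m => S m) (by simp [S])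
    fun m => Nat.cast_ne_zero.mpr (by simp [S, Finset.sum_range_succ])
  obtain rfl : (fun s => stickBreaking x s.castSucc) = y := funext fun s => (hx s).trans (hS s)
  calc MvPolynomial.eval (fun s : Fin n => stickBreaking x s.castSucc) p
      = MvPolynomial.aeval x (MvPolynomial.aeval
          (fun s : Fin n => stickBreaking (MvPolynomial.X (R := K)) s.castSucc) p) := by
        rw [MvPolynomial.comp_aeval_apply, ← MvPolynomial.aeval_eq_eval]
        simp [map_stickBreaking]
    _ = MvPolynomial.eval _ 0 := by rw [hp, map_zero, map_zero]

theorem algebraicIndependent_stickBreaking [CharZero K] {A : Type*} [CommRing A] [Algebra K A]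
    {x : Fin n → A} (hx : AlgebraicIndependent K x) :
    AlgebraicIndependent K fun s : Fin n => stickBreaking x s.castSucc := by
  have := algebraicIndependent_stickBreaking_X (K := K) (n := n) |>.map' hx
  simpa [Function.comp_def, map_stickBreaking] using this

end StickBreaking

theorem zpow_neg_two_mem_Ioo {K : Type*} [Field K] [LinearOrder K] [IsStrictOrderedRing K] {q : K}
    (hq : 1 < |q|) : q ^ (-2 : ℤ) ∈ Set.Ioo 0 1 := by
  have hq₂ : 1 < q ^ 2 := one_lt_sq_iff_one_lt_abs q |>.mpr hq
  rw [zpow_neg, zpow_ofNat]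
  exact ⟨inv_pos.mpr (one_pos.trans hq₂), inv_lt_one_of_one_lt₀ hq₂⟩

theorem zpow_neg_two_mul_succ {G : Type*} [DivisionMonoid G] (q : G) (k : ℕ) :
    q ^ (-2 * ((k : ℤ) + 1)) = (q ^ (-2 : ℤ)) ^ (k + 1) := by
  rw [zpow_mul]
  norm_cast

theorem zpow_neg_sum_sq {G ι : Type*} [DivisionCommMonoid G] (q : G) (S : Finset ι) (k : ι → ℕ) :
    (q ^ (-∑ a ∈ S, (k a : ℤ))) ^ 2 = ∏ a ∈ S, (q ^ (-2 : ℤ)) ^ k a := by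
  rw [Finset.prod_pow_eq_pow_sum, ← zpow_natCast, ← zpow_natCast, ← zpow_mul, ← zpow_mul]
  congr 1
  push_cast
  ring

open scoped InnerProductSpace ComplexConjugate

theorem star_prod_ofFn {M : Type*} [Monoid M] [StarMul M] {r : ℕ} (f : Fin r → M) :
    star (List.ofFn f).prod = (List.ofFn fun s => star (f s.rev)).prod := by
  induction r with
  | zero => simp
  | succ r ih =>
    rw [List.ofFn_succ, List.prod_cons, star_mul, ih, List.ofFn_succ', List.prod_concat]
    simp [Fin.rev_castSucc]

section Eigenvectors

variable {R E : Type*} [CommSemiring R] [AddCommMonoid E] [Module R E] [TopologicalSpace E]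

theorem pow_apply_of_apply_eq_smul {T : E →L[R] E} {x : E} {μ : R} (h : T x = μ • x) (k : ℕ) :
    (T ^ k) x = μ ^ k • x := by
  induction k with
  | zero => simp
  | succ k ih => rw [pow_succ', mul_apply_eq_comp, ih, map_smul, h, smul_smul, pow_succ]

theorem prod_ofFn_apply_of_apply_eq_smul {r : ℕ} {T : Fin r → E →L[R] E} {x : E} {μ : Fin r → R}
    (h : ∀ s, T s x = μ s • x) : (List.ofFn T).prod x = (∏ s, μ s) • x := by
  induction r with
  | zero => simp
  | succ r ih =>
    rw [List.ofFn_succ, List.prod_cons, mul_apply_eq_comp, ih fun s => h s.succ,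
      map_smul, h, smul_smul, Fin.prod_univ_succ, mul_comm]

end Eigenvectors

section Adjoint

variable {𝕜 H ι : Type*} [RCLike 𝕜] [NormedAddCommGroup H] [InnerProductSpace 𝕜 H] [CompleteSpace H]
  {b : HilbertBasis ι 𝕜 H} {T : H →L[𝕜] H} {σ : ι → ι} {w : ι → 𝕜}

theorem inner_star_apply_of_apply_eq_smul (hT : ∀ i, T (b i) = w i • b (σ i)) (i : ι) (x : H) :
    ⟪b i, star T x⟫_𝕜 = conj (w i) * ⟪b (σ i), x⟫_𝕜 := by
  rw [ContinuousLinearMap.star_eq_adjoint, ContinuousLinearMap.adjoint_inner_right, hT,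
    inner_smul_left]

theorem star_apply_of_injective (hσ : Function.Injective σ)
    (hT : ∀ i, T (b i) = w i • b (σ i)) (i : ι) : star T (b (σ i)) = conj (w i) • b i := by
  classical
  refine b.repr.injective (lp.ext (funext fun j => ?_))
  simp only [b.repr_apply_apply, inner_star_apply_of_apply_eq_smul hT, inner_smul_right,
    orthonormal_iff_ite.mp b.orthonormal, hσ.eq_iff]
  split_ifs with h <;> simp [h]

theorem star_apply_of_notMem_range (hT : ∀ i, T (b i) = w i • b (σ i)) {i : ι}
    (hi : i ∉ Set.range σ) : star T (b i) = 0 := by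
  classical
  refine b.repr.injective (lp.ext (funext fun j => ?_))
  have hji : σ j ≠ i := fun h => hi ⟨j, h⟩
  simp [b.repr_apply_apply, inner_star_apply_of_apply_eq_smul hT,
    orthonormal_iff_ite.mp b.orthonormal, hji]

theorem inner_apply_of_apply_eq_smul_self (hT : ∀ i, T (b i) = w i • b i) (i : ι) (x : H) :
    ⟪b i, T x⟫_𝕜 = w i * ⟪b i, x⟫_𝕜 := by
  have hstar : star T (b i) = conj (w i) • b i :=
    star_apply_of_injective Function.injective_id hT i
  rw [← ContinuousLinearMap.adjoint_inner_left, ← ContinuousLinearMap.star_eq_adjoint, hstar,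
    inner_smul_left, RCLike.conj_conj]

end Adjoint

section WeightedShift

variable {𝕜 H G : Type*} [RCLike 𝕜] [NormedAddCommGroup H] [InnerProductSpace 𝕜 H]

/-- `T` is a weighted shift by `d`, with nowhere vanishing weights, of the basis `b`. -/
def IsWeightedShift [Add G] (b : HilbertBasis G 𝕜 H) (d : G) (T : H →L[𝕜] H) : Prop :=
  ∃ w : G → 𝕜, (∀ g, w g ≠ 0) ∧ ∀ g, T (b g) = w g • b (g + d)

namespace IsWeightedShift

variable [AddCommMonoid G] {b : HilbertBasis G 𝕜 H} {d d' : G} {S T : H →L[𝕜] H}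

theorem one : IsWeightedShift b 0 (1 : H →L[𝕜] H) :=
  ⟨1, fun _ => one_ne_zero, fun g => by simp⟩

theorem mul (hS : IsWeightedShift b d S) (hT : IsWeightedShift b d' T) :
    IsWeightedShift b (d + d') (S * T) := by
  obtain ⟨w, hw, hS⟩ := hS
  obtain ⟨w', hw', hT⟩ := hT
  refine ⟨fun g => w' g * w (g + d'), fun g => mul_ne_zero (hw' g) (hw _), fun g => ?_⟩
  rw [mul_apply_eq_comp, hT, map_smul, hS, smul_smul, add_assoc, add_comm d']

theorem pow (hT : IsWeightedShift b d T) (k : ℕ) : IsWeightedShift b (k • d) (T ^ k) := by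
  induction k with
  | zero => simpa only [zero_smul, pow_zero] using one
  | succ k ih => simpa only [succ_nsmul, pow_succ] using ih.mul hT

theorem prod_ofFn {r : ℕ} {T : Fin r → H →L[𝕜] H} {d : Fin r → G}
    (hT : ∀ s, IsWeightedShift b (d s) (T s)) :
    IsWeightedShift b (∑ s, d s) (List.ofFn T).prod := by
  induction r with
  | zero => simpa only [Fin.sum_univ_zero, List.ofFn_zero, List.prod_nil] using one
  | succ r ih =>
    simpa only [Fin.sum_univ_succ, List.ofFn_succ, List.prod_cons] using
      (hT 0).mul (ih fun s => hT s.succ)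

theorem exists_inner_star_mul_diagonal_mul [CompleteSpace H] [DecidableEq G] {α β γ : G}
    {A B C : H →L[𝕜] H} (hA : IsWeightedShift b α A) (hB : IsWeightedShift b β B)
    (hC : IsWeightedShift b γ C) (g g' : G) :
    ∃ c ≠ 0, ∀ (D : H →L[𝕜] H) (χ : G → 𝕜), (∀ h, D (b h) = χ h • b h) →
      ⟪b g, (star A * D * star C * B) (b g')⟫_𝕜 =
        if g + α + γ = g' + β then c * χ (g + α) else 0 := by
  obtain ⟨wA, hwA, hA⟩ := hA
  obtain ⟨wB, hwB, hB⟩ := hB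
  obtain ⟨wC, hwC, hC⟩ := hC
  refine ⟨conj (wA g) * conj (wC (g + α)) * wB g', by simp [hwA, hwB, hwC], fun D χ hD => ?_⟩
  simp only [mul_apply_eq_comp, inner_star_apply_of_apply_eq_smul hA,
    inner_apply_of_apply_eq_smul_self hD, inner_star_apply_of_apply_eq_smul hC, hB,
    inner_smul_right, orthonormal_iff_ite.mp b.orthonormal]
  split_ifs <;> ring

end IsWeightedShift
end WeightedShift

section QuantumSphere

variable {n : ℕ}

/-- The standard basis of `ℓ²(ℤ × ℕⁿ)`. -/
def hzBasis (n : ℕ) : HilbertBasis (ℤ × (Fin n → ℕ)) ℂ (HZ n) :=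
  HilbertBasis.ofRepr (LinearIsometryEquiv.refl ℂ (HZ n))

theorem hzBasis_apply (m : ℤ) (k : Fin n → ℕ) : hzBasis n (m, k) = ez m k := by
  classical
  rw [← (hzBasis n).repr_symm_single, ez]
  convert! rfl

theorem shiftIdx_eq_rev (j : Fin n) : shiftIdx j = j.rev :=
  Fin.ext (by simp only [shiftIdx, Fin.val_rev]; omega)

/-- The degree by which `v s` shifts the standard basis. -/
def shiftDegree (s : Fin (n + 1)) : ℤ × (Fin n → ℕ) :=
  (1, (Fin.cons 0 fun j => Pi.single j.rev 1 : Fin (n + 1) → Fin n → ℕ) s)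

/-- The weight of the weighted shift `v s`, which sends `e_m ⊗ e_k` to a multiple of a basis vector
by a factor that only depends on `k`. -/
def shiftWeight (q : ℝ) : Fin (n + 1) → (Fin n → ℕ) → ℝ :=
  Fin.cons (fun k => q ^ (-∑ a, (k a : ℤ))) fun j k =>
    q ^ (-∑ a ∈ Finset.Iio j.rev, (k a : ℤ)) * √(1 - q ^ (-2 * ((k j.rev : ℤ) + 1)))

variable {q : ℝ} {v : Fin (n + 1) → (HZ n →L[ℂ] HZ n)}

theorem IsVFamily.apply (hv : IsVFamily q v) (s : Fin (n + 1)) (g : ℤ × (Fin n → ℕ)) :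
    v s (hzBasis n g) = (shiftWeight q s g.2 : ℂ) • hzBasis n (g + shiftDegree s) := by
  obtain ⟨m, k⟩ := g
  have hshift : (m, k) + shiftDegree s = (m + 1, k + (shiftDegree s).2) := rfl
  rw [← Complex.coe_algebraMap, algebraMap_smul, hshift, hzBasis_apply, hzBasis_apply]
  cases s using Fin.cases with
  | zero => simp [hv.1, shiftWeight, shiftDegree]
  | succ j =>
    have hfilter : ({a : Fin n | (a : ℕ) < n - 1 - j} : Finset (Fin n)) = Finset.Iio j.rev := by
      ext a
      simp only [Finset.mem_filter_univ, Finset.mem_Iio, Fin.lt_def, Fin.val_rev]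
      omega
    have hupdate : Function.update k j.rev (k j.rev + 1) = k + Pi.single j.rev 1 := by
      ext a
      by_cases h : a = j.rev <;> simp [h]
    simp only [hv.2, shiftWeight, shiftDegree, shiftIdx_eq_rev, hfilter, hupdate, Fin.cons_succ]

theorem shiftWeight_ne_zero (hq : 1 < |q|) (s : Fin (n + 1)) (k : Fin n → ℕ) :
    shiftWeight q s k ≠ 0 := by
  have hq₀ : q ≠ 0 := abs_pos.mp (one_pos.trans hq)
  obtain ⟨hpos, hlt⟩ := zpow_neg_two_mem_Ioo hq
  cases s using Fin.cases with
  | zero => exact zpow_ne_zero _ hq₀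
  | succ j =>
    refine mul_ne_zero (zpow_ne_zero _ hq₀) (Real.sqrt_ne_zero'.mpr (sub_pos.mpr ?_))
    rw [zpow_neg_two_mul_succ]
    exact pow_lt_one₀ hpos.le hlt (Nat.succ_ne_zero _)

theorem shiftWeight_sq (hq : 1 < |q|) (s : Fin (n + 1)) (k : Fin n → ℕ) :
    shiftWeight q s k ^ 2 =
      stickBreaking (fun a => (q ^ (-2 : ℤ)) ^ (k + (shiftDegree s).2) a) s := by
  obtain ⟨hpos, hlt⟩ := zpow_neg_two_mem_Ioo hq
  cases s using Fin.cases with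
  | zero => simpa [shiftWeight, stickBreaking, shiftDegree] using zpow_neg_sum_sq q Finset.univ k
  | succ j =>
    have hsqrt : 0 ≤ 1 - (q ^ (-2 : ℤ)) ^ (k j.rev + 1) :=
      sub_nonneg.mpr (pow_le_one₀ hpos.le hlt.le)
    have hIio : ∏ a ∈ Finset.Iio j.rev, (q ^ (-2 : ℤ)) ^ (k + Pi.single j.rev 1 : Fin n → ℕ) a =
        ∏ a ∈ Finset.Iio j.rev, (q ^ (-2 : ℤ)) ^ k a :=
      Finset.prod_congr rfl fun a ha => by
        rw [Pi.add_apply, Pi.single_eq_of_ne (Finset.mem_Iio.mp ha).ne, add_zero]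
    simp only [shiftWeight, stickBreaking, shiftDegree, Fin.cons_succ, zpow_neg_two_mul_succ]
    rw [mul_pow, Real.sq_sqrt hsqrt, zpow_neg_sum_sq, hIio, Pi.add_apply, Pi.single_eq_same]

theorem IsVFamily.isWeightedShift (hv : IsVFamily q v) (hq : 1 < |q|) (s : Fin (n + 1)) :
    IsWeightedShift (hzBasis n) (shiftDegree s) (v s) :=
  ⟨_, fun g => Complex.ofReal_ne_zero.mpr (shiftWeight_ne_zero hq s g.2), hv.apply s⟩

theorem stickBreaking_pow_eq_zero_of_notMem_range {R : Type*} [CommRing R] (x : R)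
    {s : Fin (n + 1)} {g : ℤ × (Fin n → ℕ)} (hg : g ∉ Set.range (· + shiftDegree s)) :
    stickBreaking (fun a => x ^ g.2 a) s = 0 := by
  cases s using Fin.cases with
  | zero => exact absurd ⟨(g.1 - 1, g.2), by simp [shiftDegree]⟩ hg
  | succ j =>
    have hj : g.2 j.rev = 0 := by
      by_contra h
      refine hg ⟨(g.1 - 1, g.2 - Pi.single j.rev 1), Prod.ext (by simp [shiftDegree]) ?_⟩
      refine tsub_add_cancel_of_le (Pi.le_def.mpr fun a => ?_)
      by_cases ha : a = j.rev
      · simpa [ha] using Nat.one_le_iff_ne_zero.mpr h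
      · simp [ha]
    simp [stickBreaking, hj]

theorem IsVFamily.mul_star_apply (hv : IsVFamily q v) (hq : 1 < |q|) (s : Fin (n + 1))
    (g : ℤ × (Fin n → ℕ)) :
    (v s * star (v s)) (hzBasis n g) =
      stickBreaking (fun a => ((q ^ (-2 : ℤ) : ℝ) : ℂ) ^ g.2 a) s • hzBasis n g := by
  rw [mul_apply_eq_comp]
  by_cases hg : g ∈ Set.range (· + shiftDegree s)
  · obtain ⟨g, rfl⟩ := hg
    rw [star_apply_of_injective (add_left_injective _) (hv.apply s), map_smul, hv.apply, smul_smul,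
      Complex.conj_ofReal, ← Complex.ofReal_mul, ← sq, shiftWeight_sq hq]
    congr 1
    refine (map_stickBreaking Complex.ofRealHom _ s).trans ?_
    simp only [map_pow, Complex.ofRealHom_eq_coe, Prod.snd_add]
  · rw [star_apply_of_notMem_range (hv.apply s) hg, map_zero,
      stickBreaking_pow_eq_zero_of_notMem_range _ hg, zero_smul]

theorem linearIndependent_shiftDegree :
    LinearIndependent ℕ (shiftDegree : Fin (n + 1) → ℤ × (Fin n → ℕ)) := by
  rw [linearIndependent_iff_injective_fintypeLinearCombination]
  intro e e' h
  simp only [Fintype.linearCombination_apply] at h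
  have hfst : ∑ s, e s = ∑ s, e' s := by
    have hcast : ∑ s, (e s : ℤ) = ∑ s, (e' s : ℤ) := by
      simpa [Prod.fst_sum, shiftDegree] using congrArg Prod.fst h
    exact_mod_cast hcast
  have hsucc (j : Fin n) : e j.succ = e' j.succ := by
    simpa [Prod.snd_sum, shiftDegree, Fin.sum_univ_succ, Pi.single_apply] using
      congrFun (congrArg Prod.snd h) j.rev
  have hzero : e 0 = e' 0 := by simpa [Fin.sum_univ_succ, hsucc] using hfst
  exact funext (Fin.cases hzero hsucc)

theorem IsVFamily.prod_pow_mul_star_apply (hv : IsVFamily q v) (hq : 1 < |q|) (j : Fin n → ℕ)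
    (g : ℤ × (Fin n → ℕ)) :
    (List.ofFn fun s : Fin n => (v s.castSucc * star (v s.castSucc)) ^ j s).prod (hzBasis n g) =
      (∏ s, stickBreaking (fun a => ((q ^ (-2 : ℤ) : ℝ) : ℂ) ^ g.2 a) s.castSucc ^ j s) •
        hzBasis n g :=
  prod_ofFn_apply_of_apply_eq_smul fun s =>
    pow_apply_of_apply_eq_smul (hv.mul_star_apply hq s.castSucc g) (j s)

namespace pIdx

/-- The components `(i, j_{n+1}, k)` of an index `(i, j, j_{n+1}, k)`, which are the ones that
determine how `p^{i,j,k}` shifts the standard basis. -/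
def shiftPart (t : pIdx n) : (Fin n → ℕ) × ℤ × (Fin n → ℕ) :=
  (t.1.1, t.1.2.2.1, t.1.2.2.2)

/-- The exponents of `v_1, …, v_{n+1}` in `p^{i,j,k}`, outside of the `y_m`. -/
def posExp (t : pIdx n) : Fin (n + 1) → ℕ :=
  Fin.snoc (α := fun _ => ℕ) t.1.2.2.2 t.1.2.2.1.toNat

/-- The exponents of `v_1*, …, v_{n+1}*` in `p^{i,j,k}`, outside of the `y_m`. -/
def negExp (t : pIdx n) : Fin (n + 1) → ℕ :=
  Fin.snoc (α := fun _ => ℕ) t.1.1 (-t.1.2.2.1).toNat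

theorem posExp_eq_zero_or_negExp_eq_zero (t : pIdx n) (s : Fin (n + 1)) :
    t.posExp s = 0 ∨ t.negExp s = 0 := by
  cases s using Fin.lastCases with
  | last => simp only [posExp, negExp, Fin.snoc_last]; omega
  | cast m => simpa only [posExp, negExp, Fin.snoc_castSucc, Nat.mul_eq_zero, or_comm] using t.2 m

theorem shiftPart_eq_of_add_eq_add {t t' : pIdx n}
    (h : t'.posExp + t.negExp = t'.negExp + t.posExp) : t.shiftPart = t'.shiftPart := by
  have hpos : t.posExp = t'.posExp := funext fun s => by
    have := congrFun h s
    have := t.posExp_eq_zero_or_negExp_eq_zero s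
    have := t'.posExp_eq_zero_or_negExp_eq_zero s
    simp only [Pi.add_apply] at *
    omega
  have hneg : t.negExp = t'.negExp := by
    rw [hpos, add_comm t'.posExp] at h
    exact add_right_cancel h
  obtain ⟨hk, hl⟩ := Fin.snoc_injective2 hpos
  obtain ⟨hi, hl'⟩ := Fin.snoc_injective2 hneg
  exact Prod.ext hi (Prod.ext (by dsimp only [shiftPart]; omega) hk)

theorem ext_of_shiftPart {t t' : pIdx n} (h : t.shiftPart = t'.shiftPart)
    (hj : t.1.2.1 = t'.1.2.1) : t = t' := by
  simp only [shiftPart, Prod.mk.injEq] at h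
  exact Subtype.ext (Prod.ext h.1 (Prod.ext hj (Prod.ext h.2.1 h.2.2)))

end pIdx

theorem pOp_eq_star_mul (v : Fin (n + 1) → (HZ n →L[ℂ] HZ n)) (t : pIdx n) :
    pOp v t = star (List.ofFn fun s : Fin n => v s.castSucc ^ t.1.1 s).prod *
      (List.ofFn fun s : Fin n => (v s.castSucc * star (v s.castSucc)) ^ t.1.2.1 s).prod *
      star (v (Fin.last n) ^ (-t.1.2.2.1).toNat) *
      (v (Fin.last n) ^ t.1.2.2.1.toNat *
        (List.ofFn fun s : Fin n => v s.castSucc ^ t.1.2.2.2 s).prod) := by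
  rw [star_prod_ofFn, pOp]
  simp only [star_pow]
  split_ifs with h
  · rw [Int.toNat_of_nonpos (neg_nonpos.mpr h), pow_zero, mul_one, mul_assoc _ (_ ^ _)]
  · rw [Int.toNat_of_nonpos (not_le.mp h).le, pow_zero, one_mul]

theorem IsVFamily.exists_inner_pOp (hv : IsVFamily q v) (hq : 1 < |q|) (t₀ : pIdx n)
    (g g' : ℤ × (Fin n → ℕ)) :
    ∃ c ≠ 0, ∀ t : pIdx n, t.shiftPart = t₀.shiftPart →
      ⟪hzBasis n g, pOp v t (hzBasis n g')⟫_ℂ =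
        if g + Fintype.linearCombination ℕ shiftDegree t₀.negExp =
            g' + Fintype.linearCombination ℕ shiftDegree t₀.posExp then
          c * ∏ s : Fin n, stickBreaking (fun a => ((q ^ (-2 : ℤ) : ℝ) : ℂ) ^
            (g + ∑ m : Fin n, t₀.1.1 m • shiftDegree m.castSucc).2 a) s.castSucc ^ t.1.2.1 s
        else 0 := by
  have hpow (e : ℕ) (s : Fin (n + 1)) := (hv.isWeightedShift hq s).pow e
  have hprod (e : Fin n → ℕ) := IsWeightedShift.prod_ofFn fun s => hpow (e s) s.castSucc
  obtain ⟨c, hc, h⟩ := IsWeightedShift.exists_inner_star_mul_diagonal_mul (hprod t₀.1.1)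
    ((hpow t₀.1.2.2.1.toNat (Fin.last n)).mul (hprod t₀.1.2.2.2))
    (hpow (-t₀.1.2.2.1).toNat (Fin.last n)) g g'
  refine ⟨c, hc, fun t ht => ?_⟩
  simp only [pIdx.shiftPart, Prod.mk.injEq] at ht
  obtain ⟨hi, hl, hk⟩ := ht
  rw [pOp_eq_star_mul, hi, hl, hk, h _ _ (hv.prod_pow_mul_star_apply hq t.1.2.1)]
  simp only [pIdx.negExp, pIdx.posExp, Fintype.linearCombination_apply, Fin.sum_univ_castSucc,
    Fin.snoc_castSucc, Fin.snoc_last, add_assoc, add_comm (t₀.1.2.2.1.toNat • _)]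

theorem IsVFamily.exists_linearMap_pOp (hv : IsVFamily q v) (hq : 1 < |q|) (t₀ : pIdx n) :
    ∃ (Φ : (HZ n →L[ℂ] HZ n) →ₗ[ℂ] (Fin n → ℕ) → ℂ) (d : Fin n → ℕ), ∀ t,
      (t.shiftPart ≠ t₀.shiftPart → Φ (pOp v t) = 0) ∧
      (t.shiftPart = t₀.shiftPart → Φ (pOp v t) = ∏ s : Fin n,
        stickBreaking (fun a (z : Fin n → ℕ) => ((q ^ (-2 : ℤ) : ℝ) : ℂ) ^ (z a + d a))
          s.castSucc ^ t.1.2.1 s) := by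
  -- These base points differ by the degree of `t₀`, so only monomials of that degree are seen.
  let deg := Fintype.linearCombination ℕ (shiftDegree (n := n))
  let g (z : Fin n → ℕ) : ℤ × (Fin n → ℕ) := (0, z) + deg t₀.posExp
  let g' (z : Fin n → ℕ) : ℤ × (Fin n → ℕ) := (0, z) + deg t₀.negExp
  have hdeg (t : pIdx n) (z : Fin n → ℕ) (h : g z + deg t.negExp = g' z + deg t.posExp) :
      t.shiftPart = t₀.shiftPart := by
    simp only [g, g', add_assoc, add_right_inj, ← map_add] at h
    exact pIdx.shiftPart_eq_of_add_eq_add <|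
      linearIndependent_iff_injective_fintypeLinearCombination.mp linearIndependent_shiftDegree h
  choose c hc hinner using fun z => hv.exists_inner_pOp hq t₀ (g z) (g' z)
  let Φ : (HZ n →L[ℂ] HZ n) →ₗ[ℂ] (Fin n → ℕ) → ℂ := LinearMap.pi fun z =>
    (c z)⁻¹ • (innerSL ℂ (hzBasis n (g z)) ∘L
      ContinuousLinearMap.apply ℂ (HZ n) (hzBasis n (g' z))).toLinearMap
  have hΦ (T : HZ n →L[ℂ] HZ n) (z : Fin n → ℕ) :
      Φ T z = (c z)⁻¹ * ⟪hzBasis n (g z), T (hzBasis n (g' z))⟫_ℂ := rfl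
  refine ⟨Φ, (deg t₀.posExp + ∑ s : Fin n, t₀.1.1 s • shiftDegree s.castSucc).2, fun t =>
    ⟨fun ht => funext fun z => ?_, fun ht => funext fun z => ?_⟩⟩
  · obtain ⟨c', -, hinner'⟩ := hv.exists_inner_pOp hq t (g z) (g' z)
    rw [hΦ, hinner' t rfl, if_neg fun h => ht (hdeg t z h), mul_zero, Pi.zero_apply]
  · rw [hΦ, hinner z t ht, if_pos (by simp only [g, g', deg]; abel), inv_mul_cancel_left₀ (hc z),
      Finset.prod_apply]
    refine Finset.prod_congr rfl fun s _ => ?_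
    rw [Pi.pow_apply, stickBreaking_apply]
    simp only [g, add_assoc, Prod.snd_add, Pi.add_apply]

theorem stmt_7_general {n : ℕ} {q : ℝ} (hq : 1 < |q|) {v : Fin (n + 1) → (HZ n →L[ℂ] HZ n)}
    (hv : IsVFamily q v) : LinearIndependent ℂ (pOp v) := by
  refine linearIndependent_of_fiberwise (M := (Fin n → ℕ) → ℂ) pIdx.shiftPart fun t₀ => ?_
  obtain ⟨Φ, d, hΦ⟩ := hv.exists_linearMap_pOp hq t₀
  obtain ⟨hpos, hlt⟩ := zpow_neg_two_mem_Ioo hq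
  have hu (a : Fin n) : Function.Injective fun k : ℕ => ((q ^ (-2 : ℤ) : ℝ) : ℂ) ^ (k + d a) := by
    simp_rw [← Complex.ofReal_pow]
    exact Complex.ofReal_injective.comp
      ((pow_right_injective₀ hpos hlt.ne).comp (add_left_injective (d a)))
  have hindep := linearIndependent_prod_pow (R := ℂ)
    (algebraicIndependent_stickBreaking (algebraicIndependent_pi_of_injective (K := ℂ) hu))
  have hj : Function.Injective fun t : pIdx.shiftPart ⁻¹' {pIdx.shiftPart t₀} => t.1.1.2.1 :=
    fun t t' h => Subtype.ext (pIdx.ext_of_shiftPart (t.2.trans t'.2.symm) h)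
  refine ⟨Φ, fun t => (hΦ t).1, ?_⟩
  rw [funext fun t : pIdx.shiftPart ⁻¹' {pIdx.shiftPart t₀} => (hΦ t).2 t.2]
  exact hindep.comp _ hj

end QuantumSphere

/-- Fix `n ≥ 1` and `q > 1`.  The family of all monomials
`p^{i,j,k} = (v_n*)^{i_n} ⋯ (v_1*)^{i_1} y_1^{j_1} ⋯ y_n^{j_n} Y v_1^{k_1} ⋯ v_n^{k_n}`
(with `y_m = v_m v_m*`, `Y` a power of `v_{n+1}` or of `v_{n+1}*` according to the sign
of `j_{n+1}`, and `i_m k_m = 0` for all `m`) is linearly independent over `ℂ`. -/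
theorem stmt_7 (n : ℕ) (hn : 1 ≤ n) (q : ℝ) (hq : 1 < q)
    (v : Fin (n + 1) → (HZ n →L[ℂ] HZ n)) (hv : IsVFamily q v) :
    LinearIndependent ℂ (pOp v) :=
  stmt_7_general (hq.trans_le (le_abs_self q)) hv
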